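/- arXiv:1404.2750 — 4 statements merged into one kernel-verified Lean document; each statement's English description precedes it below -/
import Mathlib

section
/- Let X be an ℝⁿ-valued random variable whose law has a density f_X (with respect to Lebesgue measure) that is continuous on its support, a polytope P ⊆ [−1,1]ⁿ, and vanishes outside P. Then for every k ≥ 1 and every δ > 0, the map (μ₁, …, μ_k) ↦ P(⟨μ₁, X⟩ ≥ 0, ⟨μ₂, X⟩ ≥ 0, …, ⟨μ_k, X⟩ ≥ 0) is Lipschitz continuous on the set {(μ₁,…,μ_k) ∈ (ℝⁿ)^k : ‖μ_j‖ ≥ δ for all j}. -/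
open MeasureTheory Set Filter
open scoped RealInnerProductSpace NNReal

/-! The density is bounded by some `M` on the compact polytope, which lies in a ball of radius `R`.
If `x` satisfies `0 ≤ ⟪μ_j, x⟫` for all `j` but `⟪ν_j, x⟫ < 0` for some `j`, then
`|⟪μ_j, x⟫| ≤ ‖μ_j - ν_j‖ ‖x‖`, so inside the polytope `x` lies in a slab around the hyperplane
`μ_j^⊥` of half-width at most `R ‖μ - ν‖ / δ`. Rotating `μ_j` onto a coordinate axis shows that
such a slab, cut by the ball, has volume linear in its half-width (`volume_slab_le`). Hence the
probability of the slab is at most a constant times `‖μ - ν‖` (`law_le`), and a union bound over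
`j` gives the one-sided estimate, which by symmetry is the Lipschitz bound. -/

/-- The part of a slab of half-width `t` lying in the ball of radius `R` is contained, in an
orthonormal basis starting with the normal vector `u`, in a box with one side `2t` and all
others `2R`. -/
lemma volume_slab_le {n : ℕ} (u : EuclideanSpace ℝ (Fin n)) (hu : ‖u‖ = 1) {R : ℝ} (hR : 0 ≤ R)
    {t : ℝ} (ht : 0 ≤ t) :
    volume {x : EuclideanSpace ℝ (Fin n) | ‖x‖ ≤ R ∧ |⟪u, x⟫| ≤ t} ≤
      ENNReal.ofReal ((2 * R) ^ (n - 1) * (2 * t)) := by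
  obtain ⟨m, rfl⟩ : ∃ m, n = m + 1 := by
    cases n with
    | zero =>
      rw [Subsingleton.elim u 0, norm_zero] at hu
      norm_num at hu
    | succ m => exact ⟨m, rfl⟩
  have hv : Orthonormal ℝ (({0} : Set (Fin (m + 1))).domRestrict (fun _ => u)) := by
    constructor
    · intro i
      exact hu
    · intro i j hij
      exact absurd (Subsingleton.elim i j) hij
  obtain ⟨b, hb⟩ := hv.exists_orthonormalBasis_extension_of_card_eq (by simp)
  have hb0 : b 0 = u := hb 0 rfl
  let w : Fin (m + 1) → ℝ := Fin.cons t (fun _ => R)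
  let e : EuclideanSpace ℝ (Fin (m + 1)) → (Fin (m + 1) → ℝ) := fun x => WithLp.ofLp (b.repr x)
  have he : MeasurePreserving e volume volume :=
    (EuclideanSpace.volume_preserving_symm_measurableEquiv_toLp (Fin (m + 1))).comp
      b.measurePreserving_repr
  have hsub : {x : EuclideanSpace ℝ (Fin (m + 1)) | ‖x‖ ≤ R ∧ |⟪u, x⟫| ≤ t} ⊆
      e ⁻¹' (Icc (-w) w) := by
    rintro x ⟨hx, hxt⟩
    have key : ∀ i, |e x i| ≤ w i := by
      intro i
      have hi : e x i = ⟪b i, x⟫ := b.repr_apply_apply x i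
      rw [hi]
      refine Fin.cases ?_ (fun i => ?_) i
      · simpa [w, hb0] using hxt
      · have := abs_real_inner_le_norm (b i.succ) x
        rw [b.norm_eq_one, one_mul] at this
        simpa [w] using this.trans hx
    exact ⟨fun i => (abs_le.1 (key i)).1, fun i => (abs_le.1 (key i)).2⟩
  calc _ ≤ volume (e ⁻¹' (Icc (-w) w)) := measure_mono hsub
    _ = volume (Icc (-w) w) := he.measure_preimage measurableSet_Icc.nullMeasurableSet
    _ = _ := by
      rw [Real.volume_Icc_pi, ← ENNReal.ofReal_prod_of_nonneg]
      · rw [Fin.prod_univ_succ]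
        simp only [w, Pi.neg_apply, Fin.cons_zero, Fin.cons_succ, Finset.prod_const,
          Finset.card_univ, Fintype.card_fin, Nat.add_sub_cancel]
        congr 1
        ring
      · intro i _
        refine Fin.cases ?_ (fun i => ?_) i <;> simp [w] <;> linarith

/-- A density bounded by `M` and vanishing outside `P` gives a measure dominated by `M` times
Lebesgue measure on `P`. -/
lemma law_le {n : ℕ} {P : Set (EuclideanSpace ℝ (Fin n))} (hP : MeasurableSet P)
    {f : EuclideanSpace ℝ (Fin n) → ℝ} {M : ℝ} (hM : ∀ x ∈ P, f x ≤ M)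
    (h0 : ∀ x ∉ P, f x = 0) {B : Set (EuclideanSpace ℝ (Fin n))} (hB : MeasurableSet B) :
    (volume.withDensity (fun x => ENNReal.ofReal (f x))) B ≤
      ENNReal.ofReal M * volume (P ∩ B) := by
  rw [withDensity_apply _ hB]
  calc _ ≤ ∫⁻ x in B, P.indicator (fun _ => ENNReal.ofReal M) x := by
        refine lintegral_mono fun x => ?_
        by_cases hx : x ∈ P
        · simpa [hx] using ENNReal.ofReal_le_ofReal (hM x hx)
        · simp [hx, h0 x hx]
    _ = _ := by
        rw [setLIntegral_indicator hP, setLIntegral_const]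

/-- **Lipschitz continuity of polyhedral-cone probabilities.**
If the law of `X` has a density `f` supported on a polytope `P ⊆ [−1,1]ⁿ` and
continuous on `P`, then for every `k ≥ 1` and `δ > 0` the map
`(μ₁, …, μ_k) ↦ P(⟨μ₁, X⟩ ≥ 0, …, ⟨μ_k, X⟩ ≥ 0)` is Lipschitz on the set where
`‖μ_j‖ ≥ δ` for every `j`. -/
theorem stmt_1 (n : ℕ) {Ω : Type*} [MeasureSpace Ω]
    [IsProbabilityMeasure (volume : Measure Ω)]
    (X : Ω → EuclideanSpace ℝ (Fin n)) (hX : Measurable X)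
    (s : Finset (EuclideanSpace ℝ (Fin n)))
    (f : EuclideanSpace ℝ (Fin n) → ℝ)
    (hP_sub : convexHull ℝ (s : Set (EuclideanSpace ℝ (Fin n))) ⊆
      {x : EuclideanSpace ℝ (Fin n) | ∀ i, |x i| ≤ 1})
    (hf_nonneg : ∀ x, 0 ≤ f x)
    (hf_cont : ContinuousOn f (convexHull ℝ (s : Set (EuclideanSpace ℝ (Fin n)))))
    (hf_supp : ∀ x ∉ convexHull ℝ (s : Set (EuclideanSpace ℝ (Fin n))), f x = 0)
    (hlaw : Measure.map X (volume : Measure Ω) =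
      volume.withDensity (fun x => ENNReal.ofReal (f x)))
    (k : ℕ) (hk : 1 ≤ k) (δ : ℝ) (hδ : 0 < δ) :
    ∃ C : ℝ≥0, LipschitzOnWith C
      (fun μs : Fin k → EuclideanSpace ℝ (Fin n) =>
        ((volume : Measure Ω) {ω | ∀ j, 0 ≤ ⟪μs j, X ω⟫}).toReal)
      {μs : Fin k → EuclideanSpace ℝ (Fin n) | ∀ j, δ ≤ ‖μs j‖} := by
  set P := convexHull ℝ (s : Set (EuclideanSpace ℝ (Fin n))) with hPdef
  have hPc : IsCompact P := s.finite_toSet.isCompact_convexHull (𝕜 := ℝ)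
  obtain ⟨R, hR0, hR⟩ : ∃ R : ℝ, 0 ≤ R ∧ ∀ x ∈ P, ‖x‖ ≤ R := by
    obtain ⟨R, hR⟩ := hPc.isBounded.exists_norm_le
    exact ⟨max R 0, le_max_right _ _, fun x hx => (hR x hx).trans (le_max_left _ _)⟩
  obtain ⟨M, hM0, hM⟩ : ∃ M : ℝ, 0 ≤ M ∧ ∀ x ∈ P, f x ≤ M := by
    obtain ⟨M, hM⟩ := hPc.exists_bound_of_continuousOn hf_cont
    exact ⟨max M 0, le_max_right _ _,
      fun x hx => ((le_abs_self _).trans (hM x hx)).trans (le_max_left _ _)⟩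
  -- `K * d` bounds the probability of a single slab when the distance of the normals is `d`.
  set K : ℝ := M * ((2 * R) ^ (n - 1) * (2 * (R / δ))) with hK
  have hK0 : 0 ≤ K := by positivity
  refine ⟨⟨k * K, by positivity⟩, LipschitzOnWith.of_le_add_mul _ ?_⟩
  intro μ hμ ν _
  set d := dist μ ν with hd
  have hd0 : 0 ≤ d := dist_nonneg
  let B : Fin k → Set (EuclideanSpace ℝ (Fin n)) := fun j => {x | |⟪μ j, x⟫| ≤ d * ‖x‖}
  have hBm : ∀ j, MeasurableSet (B j) := fun j =>
    (isClosed_le (f := fun x => |⟪μ j, x⟫|) (g := fun x => d * ‖x‖)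
      (by fun_prop) (by fun_prop)).measurableSet
  have hslab : ∀ j, (volume : Measure Ω) (X ⁻¹' B j) ≤ ENNReal.ofReal (K * d) := by
    intro j
    have hj : δ ≤ ‖μ j‖ := hμ j
    have hpos : 0 < ‖μ j‖ := hδ.trans_le hj
    have hsub : P ∩ B j ⊆
        {x | ‖x‖ ≤ R ∧ |⟪(‖μ j‖⁻¹ : ℝ) • μ j, x⟫| ≤ R / δ * d} := by
      rintro x ⟨hxP, hxB⟩
      refine ⟨hR x hxP, ?_⟩
      have h1 : |⟪μ j, x⟫| ≤ d * R :=
        le_trans hxB (mul_le_mul_of_nonneg_left (hR x hxP) hd0)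
      rw [real_inner_smul_left, abs_mul, abs_of_pos (inv_pos.2 hpos)]
      calc ‖μ j‖⁻¹ * |⟪μ j, x⟫| ≤ δ⁻¹ * (d * R) := by gcongr
        _ = R / δ * d := by ring
    have hunit : ‖(‖μ j‖⁻¹ : ℝ) • μ j‖ = 1 := by
      rw [norm_smul, norm_inv, norm_norm, inv_mul_cancel₀ hpos.ne']
    rw [← Measure.map_apply hX (hBm j), hlaw]
    calc _ ≤ ENNReal.ofReal M * volume (P ∩ B j) :=
          law_le hPc.isClosed.measurableSet hM hf_supp (hBm j)
      _ ≤ ENNReal.ofReal M * ENNReal.ofReal ((2 * R) ^ (n - 1) * (2 * (R / δ * d))) := by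
          gcongr
          exact (measure_mono hsub).trans (volume_slab_le _ hunit hR0 (by positivity))
      _ = _ := by
          rw [← ENNReal.ofReal_mul hM0]
          congr 1
          rw [hK]
          ring
  have hcover : {ω | ∀ j, 0 ≤ ⟪μ j, X ω⟫} ⊆
      {ω | ∀ j, 0 ≤ ⟪ν j, X ω⟫} ∪ ⋃ j, X ⁻¹' B j := by
    intro ω hω
    by_cases h : ∀ j, 0 ≤ ⟪ν j, X ω⟫
    · exact Or.inl h
    · push Not at h
      obtain ⟨j, hj⟩ := h
      refine Or.inr (mem_iUnion.2 ⟨j, ?_⟩)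
      change |⟪μ j, X ω⟫| ≤ d * ‖X ω‖
      rw [abs_of_nonneg (hω j)]
      calc ⟪μ j, X ω⟫ ≤ ⟪μ j - ν j, X ω⟫ := by
            rw [inner_sub_left]
            linarith
        _ ≤ ‖μ j - ν j‖ * ‖X ω‖ := real_inner_le_norm _ _
        _ ≤ d * ‖X ω‖ := by
            gcongr
            rw [← dist_eq_norm]
            exact dist_le_pi_dist μ ν j
  have hE : (volume : Measure Ω) {ω | ∀ j, 0 ≤ ⟪μ j, X ω⟫} ≤
      (volume : Measure Ω) {ω | ∀ j, 0 ≤ ⟪ν j, X ω⟫} + ENNReal.ofReal (k * K * d) := by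
    refine (measure_mono hcover).trans ((measure_union_le _ _).trans ?_)
    gcongr
    refine (measure_iUnion_fintype_le _ _).trans ((Finset.sum_le_sum fun j _ => hslab j).trans ?_)
    rw [Finset.sum_const, Finset.card_univ, Fintype.card_fin, nsmul_eq_mul, mul_assoc (k : ℝ) K d,
      ENNReal.ofReal_mul (Nat.cast_nonneg k), ENNReal.ofReal_natCast]
  have hreal := ENNReal.toReal_mono
    (ENNReal.add_ne_top.2 ⟨measure_ne_top _ _, ENNReal.ofReal_ne_top⟩) hE
  rwa [ENNReal.toReal_add (measure_ne_top _ _) ENNReal.ofReal_ne_top,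
    ENNReal.toReal_ofReal (by positivity)] at hreal
end

section
/- Let I and L be finite sets, let p be an ℝ^{I×L}-valued random variable whose law is absolutely continuous with respect to Lebesgue measure, and let b ∈ ℝ^I with b_i > 0 for every i ∈ I. Then almost surely all partial matchings have pairwise distinct values: for any two distinct partial matchings M ≠ M′ of I with L, almost surely Σ_{(i,l)∈M} b_i p_{il} ≠ Σ_{(i,l)∈M′} b_i p_{il}. In particular, almost surely there is a unique partial matching M maximizing Σ_{(i,l)∈M} b_i p_{il}, i.e. the assignment problem of maximizing Σ_{i∈I} b_i Σ_{l∈L} p_{il} x_{il} over doubly substochastic matrices x has an almost surely unique optimal extreme-point solution. -/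
/-!
The value of a set of pairs `M` is a linear functional of the matrix `x ∈ ℝ^{I×L}`. For `M ≠ M'`
the difference of the two functionals is nonzero: at the elementary matrix of a pair `(i, l)` lying
in exactly one of the two sets it equals `± b i ≠ 0`. Hence the two values agree only on a proper
subspace, which is Lebesgue-null (`ae_sum_ne`), and by absolute continuity `p` almost surely avoids
it. There are finitely many pairs `(M, M')`, so almost surely all values are distinct at once; a
maximizer over the finite nonempty family of partial matchings is then unique.
-/

open MeasureTheory Set Filter

/-- A partial matching of `I` with `L`: a set of pairs in which each `i ∈ I` and
each `l ∈ L` appears at most once. -/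
def IsPartialMatching {I L : Type*} (M : Finset (I × L)) : Prop :=
  ∀ e ∈ M, ∀ e' ∈ M, (e.1 = e'.1 ∨ e.2 = e'.2) → e = e'

/-- The value of the set of pairs `M` under bids `b`, as a linear functional of the matrix. -/
def valueMap {I L : Type*} (b : I → ℝ) (M : Finset (I × L)) : (I → L → ℝ) →ₗ[ℝ] ℝ where
  toFun x := ∑ e ∈ M, b e.1 * x e.1 e.2
  map_add' x y := by simp [mul_add, Finset.sum_add_distrib]
  map_smul' c x := by
    simp only [Pi.smul_apply, smul_eq_mul, RingHom.id_apply, Finset.mul_sum]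
    exact Finset.sum_congr rfl fun e _ => by ring

lemma valueMap_apply {I L : Type*} (b : I → ℝ) (M : Finset (I × L)) (x : I → L → ℝ) :
    valueMap b M x = ∑ e ∈ M, b e.1 * x e.1 e.2 := rfl

lemma valueMap_single {I L : Type*} [DecidableEq I] [DecidableEq L] (b : I → ℝ)
    (M : Finset (I × L)) (e : I × L) :
    valueMap b M (fun i l => if (i, l) = e then 1 else 0) = if e ∈ M then b e.1 else 0 := by
  simp [valueMap_apply]

/-- Positive bids make `M` recoverable from its functional. -/
lemma valueMap_injective {I L : Type*} [DecidableEq I] [DecidableEq L] {b : I → ℝ}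
    (hb : ∀ i, 0 < b i) : Function.Injective (valueMap (L := L) b) := by
  intro M M' h
  ext e
  have := valueMap_single b M e
  rw [h, valueMap_single] at this
  have := (hb e.1).ne'
  split_ifs at * <;> simp_all

lemma ae_sum_ne {I L : Type*} [Fintype I] [Fintype L] [DecidableEq I] [DecidableEq L]
    {b : I → ℝ} (hb : ∀ i, 0 < b i) {M M' : Finset (I × L)} (hne : M ≠ M') :
    ∀ᵐ x ∂(volume : Measure (I → L → ℝ)),
      ∑ e ∈ M, b e.1 * x e.1 e.2 ≠ ∑ e ∈ M', b e.1 * x e.1 e.2 := by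
  have hker : LinearMap.ker (valueMap b M - valueMap b M') ≠ ⊤ := by
    rw [Ne, LinearMap.ker_eq_top, sub_eq_zero]
    exact fun h => hne (valueMap_injective hb h)
  have h0 := Measure.addHaar_submodule (volume : Measure (I → L → ℝ)) _ hker
  filter_upwards [measure_eq_zero_iff_ae_notMem.1 h0] with x hx heq
  exact hx (by simp [valueMap_apply, heq])

/-- **Almost-sure uniqueness of the optimal assignment.**
If the law of the click-probability matrix `p` is absolutely continuous with
respect to Lebesgue measure and all bids `b i` are positive, then any two distinct
partial matchings almost surely have distinct values, and almost surely there is a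
unique partial matching maximizing `∑_{(i,l) ∈ M} b i * p i l`. -/
theorem stmt_2 {Ω : Type*} [MeasureSpace Ω] [IsProbabilityMeasure (volume : Measure Ω)]
    (I L : Type*) [Fintype I] [Fintype L] [DecidableEq I] [DecidableEq L]
    (p : Ω → I → L → ℝ) (hp_meas : Measurable p)
    (habs : Measure.map p (volume : Measure Ω) ≪ (volume : Measure (I → L → ℝ)))
    (b : I → ℝ) (hb : ∀ i, 0 < b i) :
    (∀ M M' : Finset (I × L), IsPartialMatching M → IsPartialMatching M' → M ≠ M' →
      ∀ᵐ ω ∂(volume : Measure Ω),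
        ∑ e ∈ M, b e.1 * p ω e.1 e.2 ≠ ∑ e ∈ M', b e.1 * p ω e.1 e.2) ∧
    (∀ᵐ ω ∂(volume : Measure Ω),
      ∃! M : Finset (I × L), IsPartialMatching M ∧
        ∀ M' : Finset (I × L), IsPartialMatching M' →
          ∑ e ∈ M', b e.1 * p ω e.1 e.2 ≤ ∑ e ∈ M, b e.1 * p ω e.1 e.2) := by
  have key : ∀ M M' : Finset (I × L), M ≠ M' → ∀ᵐ ω ∂(volume : Measure Ω),
      ∑ e ∈ M, b e.1 * p ω e.1 e.2 ≠ ∑ e ∈ M', b e.1 * p ω e.1 e.2 := fun M M' hne =>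
    ae_of_ae_map hp_meas.aemeasurable (habs.ae_le (ae_sum_ne hb hne))
  refine ⟨fun M M' _ _ hne => key M M' hne, ?_⟩
  have hall : ∀ᵐ ω ∂(volume : Measure Ω), ∀ M M' : Finset (I × L), M ≠ M' →
      ∑ e ∈ M, b e.1 * p ω e.1 e.2 ≠ ∑ e ∈ M', b e.1 * p ω e.1 e.2 := by
    simpa only [ae_all_iff] using key
  filter_upwards [hall] with ω hω
  -- The empty matching shows that the family of partial matchings is nonempty.
  obtain ⟨M, hM, hmax⟩ := Set.exists_max_image {M : Finset (I × L) | IsPartialMatching M}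
    (fun M => ∑ e ∈ M, b e.1 * p ω e.1 e.2) (Set.toFinite _) ⟨∅, by simp [IsPartialMatching]⟩
  refine ⟨M, ⟨hM, hmax⟩, fun N ⟨hN, hNmax⟩ => ?_⟩
  by_contra hne
  exact hω N M hne (le_antisymm (hmax N hN) (hNmax M hM))
end

section
/- Let (T, μ) be a probability space, I and L finite sets, and p : T → [0,1]^{I×L} measurable. Define F(b) = E_μ[ max over doubly substochastic matrices x of Σ_{i∈I} b_i Σ_{l∈L} p_{il}(τ) x_{il} ] for b ∈ ℝ^I_{≥0}. Suppose y : ℝ^I_{≥0} \ {0} → ℝ^I_{≥0} is a continuous function such that for every b ≠ 0 there is a measurable choice of maximizers x^τ(b) with y_i(b) = E_μ[Σ_{l∈L} p_{il}(τ) x^τ_{il}(b)] for every i (so that F(b) = Σ_{i∈I} b_i y_i(b)). Then: (1) F is convex on ℝ^I_{≥0}; (2) F is continuously differentiable at every b ≠ 0 with ∂F/∂b_i(b) = y_i(b); and (3) if in addition y_i(b) > 0 whenever b_i > 0, then F(b) → ∞ as ‖b‖ → ∞. -/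
/-!
For `b ≠ 0` in the orthant the envelope identity `F b = ∑ i, b i * y b i` holds, and since the
maximizer at `b` remains feasible at any other `c`, also `F c ≥ ∑ i, c i * y b i`. So `F` is the
upper envelope of the linear functionals given by `y b` (`assignVal_envelope`).

* Convexity: a function lying above linear functionals that touch it at every nonzero point is
  convex.
* Differentiability: using the inequality at both `b` and `c`,
  `0 ≤ F c - F b - ∑ i, (c i - b i) * y b i ≤ ∑ i, (c i - b i) * (y c i - y b i)`,
  and the right side is `o(‖c - b‖)` by continuity of `y`.
* Coercivity: `∑ i, b i * y b i` is positive and continuous on the compact set of nonnegative unit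
  vectors, so it is at least some `m > 0` there; the lower bound by the functional at `b / ‖b‖`
  then gives `F b ≥ m * ‖b‖`.
-/

open MeasureTheory Set Filter

/-- A doubly substochastic matrix: nonnegative entries, with all row and column
sums at most one. -/
def DoublySubstochastic {I L : Type*} [Fintype I] [Fintype L] (x : I → L → ℝ) : Prop :=
  (∀ i l, 0 ≤ x i l) ∧ (∀ l, ∑ i, x i l ≤ 1) ∧ (∀ i, ∑ l, x i l ≤ 1)

/-- The optimal value of the assignment problem with weights `b i * p i l`:
the maximum of `∑ i, b i * ∑ l, p i l * x i l` over doubly substochastic `x`. -/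
noncomputable def assignVal {I L : Type*} [Fintype I] [Fintype L]
    (b : I → ℝ) (p : I → L → ℝ) : ℝ :=
  sSup ((fun x => ∑ i, b i * ∑ l, p i l * x i l) '' {x | DoublySubstochastic x})

/-- The continuous linear functional `h ↦ ∑ i, v i * h i` on `ℝ^I`. -/
noncomputable def gradCLM {I : Type*} [Fintype I] (v : I → ℝ) : (I → ℝ) →L[ℝ] ℝ :=
  ∑ i, v i • ContinuousLinearMap.proj i

/-- A feasible maximizer realizes the supremum defining `assignVal`. -/
lemma assignVal_eq_of_max {I L : Type*} [Fintype I] [Fintype L] (b : I → ℝ) (p x : I → L → ℝ)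
    (hx : DoublySubstochastic x)
    (hmax : ∀ x' : I → L → ℝ, DoublySubstochastic x' →
      ∑ i, b i * ∑ l, p i l * x' i l ≤ ∑ i, b i * ∑ l, p i l * x i l) :
    assignVal b p = ∑ i, b i * ∑ l, p i l * x i l := by
  refine IsGreatest.csSup_eq ⟨⟨x, hx, rfl⟩, ?_⟩
  rintro _ ⟨x', hx', rfl⟩
  exact hmax x' hx'

lemma assignVal_zero {I L : Type*} [Fintype I] [Fintype L] (p : I → L → ℝ) :
    assignVal (0 : I → ℝ) p = 0 := by
  rw [assignVal_eq_of_max 0 p 0 ⟨by simp, by simp, by simp⟩ (by simp)]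
  simp

lemma gradCLM_apply {I : Type*} [Fintype I] (v h : I → ℝ) :
    gradCLM v h = ∑ i, v i * h i := by
  simp [gradCLM]

/-- Each click-through rate lies in `[0, 1]`, since `p ≤ 1` and rows of `x` sum to at most one. -/
lemma integrable_rate {T : Type*} [MeasurableSpace T] (μ : Measure T) [IsProbabilityMeasure μ]
    {I L : Type*} [Fintype I] [Fintype L]
    (p : T → I → L → ℝ) (hp_meas : Measurable p)
    (hp01 : ∀ τ i l, p τ i l ∈ Set.Icc (0:ℝ) 1)
    (x : T → I → L → ℝ) (hx_meas : Measurable x) (hx : ∀ τ, DoublySubstochastic (x τ)) (i : I) :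
    Integrable (fun τ => ∑ l, p τ i l * x τ i l) μ := by
  have hm : Measurable (fun τ => ∑ l, p τ i l * x τ i l) := by fun_prop
  refine Integrable.of_bound hm.aestronglyMeasurable 1 (Eventually.of_forall fun τ => ?_)
  rw [Real.norm_of_nonneg
    (Finset.sum_nonneg fun l _ => mul_nonneg (hp01 τ i l).1 ((hx τ).1 i l))]
  refine le_trans (Finset.sum_le_sum fun l _ => ?_) ((hx τ).2.2 i)
  exact mul_le_of_le_one_left ((hx τ).1 i l) (hp01 τ i l).2

/-- The expected assignment value equals the functional `y b` at `b` and dominates it everywhere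
else on the orthant. -/
lemma assignVal_envelope {T : Type*} [MeasurableSpace T] (μ : Measure T) [IsProbabilityMeasure μ]
    {I L : Type*} [Fintype I] [Fintype L]
    (p : T → I → L → ℝ) (hp_meas : Measurable p)
    (hp01 : ∀ τ i l, p τ i l ∈ Set.Icc (0:ℝ) 1)
    (y : (I → ℝ) → I → ℝ)
    (hy : ∀ b : I → ℝ, (∀ i, 0 ≤ b i) → b ≠ 0 →
      ∃ x : T → I → L → ℝ, Measurable x ∧
        (∀ τ, DoublySubstochastic (x τ) ∧
          ∀ x' : I → L → ℝ, DoublySubstochastic x' →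
            ∑ i, b i * ∑ l, p τ i l * x' i l ≤ ∑ i, b i * ∑ l, p τ i l * x τ i l) ∧
        (∀ i, y b i = ∫ τ, ∑ l, p τ i l * x τ i l ∂μ)) :
    (∀ b : I → ℝ, (∀ i, 0 ≤ b i) → b ≠ 0 →
      ∫ τ, assignVal b (p τ) ∂μ = ∑ i, b i * y b i) ∧
    (∀ b c : I → ℝ, (∀ i, 0 ≤ b i) → b ≠ 0 → (∀ i, 0 ≤ c i) →
      ∑ i, c i * y b i ≤ ∫ τ, assignVal c (p τ) ∂μ) := by
  have hint : ∀ x : T → I → L → ℝ, Measurable x → (∀ τ, DoublySubstochastic (x τ)) →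
      ∀ c : I → ℝ, Integrable (fun τ => ∑ i, c i * ∑ l, p τ i l * x τ i l) μ :=
    fun x hx hxs c => integrable_finsetSum _ fun i _ =>
      (integrable_rate μ p hp_meas hp01 x hx hxs i).const_mul _
  have heval : ∀ x : T → I → L → ℝ, Measurable x → (∀ τ, DoublySubstochastic (x τ)) →
      ∀ c : I → ℝ, ∫ τ, ∑ i, c i * ∑ l, p τ i l * x τ i l ∂μ =
        ∑ i, c i * ∫ τ, ∑ l, p τ i l * x τ i l ∂μ := by
    intro x hx hxs c
    rw [integral_finsetSum _ fun i _ =>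
      (integrable_rate μ p hp_meas hp01 x hx hxs i).const_mul (c i)]
    simp_rw [integral_const_mul]
  constructor
  · intro b hb hb0
    obtain ⟨x, hxm, hx, hxy⟩ := hy b hb hb0
    simp_rw [fun τ => assignVal_eq_of_max b (p τ) (x τ) (hx τ).1 (hx τ).2, hxy]
    exact heval x hxm (fun τ => (hx τ).1) b
  · intro b c hb hb0 hc
    by_cases hc0 : c = 0
    · subst hc0
      simp [assignVal_zero]
    obtain ⟨x, hxm, hx, hxy⟩ := hy b hb hb0
    obtain ⟨z, hzm, hz, -⟩ := hy c hc hc0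
    simp_rw [fun τ => assignVal_eq_of_max c (p τ) (z τ) (hz τ).1 (hz τ).2, hxy]
    rw [← heval x hxm (fun τ => (hx τ).1) c]
    exact integral_mono (hint x hxm (fun τ => (hx τ).1) c) (hint z hzm (fun τ => (hz τ).1) c)
      fun τ => (hz τ).2 _ (hx τ).1

/-- **Properties of the expected assignment value** `F b = E_μ[max_x ∑ i b i ∑ l p_il x_il]`:
`F` is convex on the nonnegative orthant; it is continuously differentiable at every
`b ≠ 0` there, with gradient `y b` (the expected click-through rates of a measurable
selection of maximizers); and, if `y i b > 0` whenever `b i > 0`, then `F b → ∞` as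
`‖b‖ → ∞`. -/
theorem stmt_4 {T : Type*} [MeasurableSpace T] (μ : Measure T) [IsProbabilityMeasure μ]
    (I L : Type*) [Fintype I] [Fintype L]
    (p : T → I → L → ℝ) (hp_meas : Measurable p)
    (hp01 : ∀ τ i l, p τ i l ∈ Set.Icc (0:ℝ) 1)
    (y : (I → ℝ) → I → ℝ)
    (hy_nonneg : ∀ b : I → ℝ, (∀ i, 0 ≤ b i) → b ≠ 0 → ∀ i, 0 ≤ y b i)
    (hy_cont : ContinuousOn y {b : I → ℝ | (∀ i, 0 ≤ b i) ∧ b ≠ 0})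
    (hy : ∀ b : I → ℝ, (∀ i, 0 ≤ b i) → b ≠ 0 →
      ∃ x : T → I → L → ℝ, Measurable x ∧
        (∀ τ, DoublySubstochastic (x τ) ∧
          ∀ x' : I → L → ℝ, DoublySubstochastic x' →
            ∑ i, b i * ∑ l, p τ i l * x' i l ≤ ∑ i, b i * ∑ l, p τ i l * x τ i l) ∧
        (∀ i, y b i = ∫ τ, ∑ l, p τ i l * x τ i l ∂μ)) :
    ConvexOn ℝ {b : I → ℝ | ∀ i, 0 ≤ b i} (fun b => ∫ τ, assignVal b (p τ) ∂μ) ∧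
    (∀ b : I → ℝ, (∀ i, 0 ≤ b i) → b ≠ 0 →
      HasFDerivWithinAt (fun b => ∫ τ, assignVal b (p τ) ∂μ) (gradCLM (y b))
        {b : I → ℝ | ∀ i, 0 ≤ b i} b) ∧
    ContinuousOn (fun b => gradCLM (y b)) {b : I → ℝ | (∀ i, 0 ≤ b i) ∧ b ≠ 0} ∧
    ((∀ b : I → ℝ, (∀ i, 0 ≤ b i) → b ≠ 0 → ∀ i, 0 < b i → 0 < y b i) →
      ∀ C : ℝ, ∃ R : ℝ, ∀ b : I → ℝ, (∀ i, 0 ≤ b i) → R ≤ ‖b‖ →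
        C ≤ ∫ τ, assignVal b (p τ) ∂μ) := by
  obtain ⟨hF, hle⟩ := assignVal_envelope μ p hp_meas hp01 y hy
  have hF0 : ∫ τ, assignVal (0 : I → ℝ) (p τ) ∂μ = 0 := by simp [assignVal_zero]
  set F : (I → ℝ) → ℝ := fun b => ∫ τ, assignVal b (p τ) ∂μ with hFdef
  change ∀ b : I → ℝ, (∀ i, 0 ≤ b i) → b ≠ 0 → F b = ∑ i, b i * y b i at hF
  change ∀ b c : I → ℝ, (∀ i, 0 ≤ b i) → b ≠ 0 → (∀ i, 0 ≤ c i) →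
    ∑ i, c i * y b i ≤ F c at hle
  change F 0 = 0 at hF0
  change _ ∧ _ ∧ _ ∧ (_ → ∀ C : ℝ, ∃ R : ℝ, ∀ b : I → ℝ, (∀ i, 0 ≤ b i) → R ≤ ‖b‖ → C ≤ F b)
  have hFnn : ∀ b : I → ℝ, (∀ i, 0 ≤ b i) → 0 ≤ F b := by
    intro b hb
    by_cases hb0 : b = 0
    · rw [hb0, hF0]
    · rw [hF b hb hb0]
      exact Finset.sum_nonneg fun i _ => mul_nonneg (hb i) (hy_nonneg b hb hb0 i)
  refine ⟨⟨?_, ?_⟩, ?_, ?_, ?_⟩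
  · intro a ha b hb s t hs ht _ i
    exact add_nonneg (mul_nonneg hs (ha i)) (mul_nonneg ht (hb i))
  · intro a ha b hb s t hs ht _
    have hc : ∀ i, 0 ≤ (s • a + t • b) i := fun i =>
      add_nonneg (mul_nonneg hs (ha i)) (mul_nonneg ht (hb i))
    simp only [smul_eq_mul]
    by_cases hc0 : s • a + t • b = 0
    · rw [hc0, hF0]
      exact add_nonneg (mul_nonneg hs (hFnn a ha)) (mul_nonneg ht (hFnn b hb))
    · calc F (s • a + t • b)
          = s * ∑ i, a i * y (s • a + t • b) i + t * ∑ i, b i * y (s • a + t • b) i := by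
            rw [hF _ hc hc0, Finset.mul_sum, Finset.mul_sum, ← Finset.sum_add_distrib]
            refine Finset.sum_congr rfl fun i _ => ?_
            simp only [Pi.add_apply, Pi.smul_apply, smul_eq_mul]
            ring
        _ ≤ s * F a + t * F b :=
            add_le_add (mul_le_mul_of_nonneg_left (hle _ a hc hc0 ha) hs)
              (mul_le_mul_of_nonneg_left (hle _ b hc hc0 hb) ht)
  · intro b hb hb0
    have hne : ∀ᶠ c in nhdsWithin b {b : I → ℝ | ∀ i, 0 ≤ b i}, c ≠ 0 :=
      nhdsWithin_le_nhds (isOpen_ne.mem_nhds hb0)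
    have hmem : ∀ᶠ c in nhdsWithin b {b : I → ℝ | ∀ i, 0 ≤ b i}, ∀ i, 0 ≤ c i :=
      self_mem_nhdsWithin
    have hyt : Tendsto y (nhdsWithin b {b : I → ℝ | ∀ i, 0 ≤ b i}) (nhds (y b)) := by
      refine (hy_cont b ⟨hb, hb0⟩).mono_left (nhdsWithin_le_iff.2 ?_)
      filter_upwards [hne, hmem] with c h1 h2 using ⟨h2, h1⟩
    have hsum : Tendsto (fun c => ∑ i, |y c i - y b i|)
        (nhdsWithin b {b : I → ℝ | ∀ i, 0 ≤ b i}) (nhds 0) := by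
      have : Tendsto (fun c => ∑ i, |y c i - y b i|)
          (nhdsWithin b {b : I → ℝ | ∀ i, 0 ≤ b i}) (nhds (∑ i, |y b i - y b i|)) :=
        tendsto_finsetSum _ fun i _ => ((tendsto_pi_nhds.1 hyt i).sub_const _).abs
      simpa using this
    refine HasFDerivWithinAt.of_isLittleO (Asymptotics.IsLittleO.of_bound fun ε hε => ?_)
    filter_upwards [hne, hmem, hsum.eventually (gt_mem_nhds hε)] with c hc0 hc hcε
    -- These two bounds squeeze the remainder between `0` and `∑ i, (c i - b i) * (y c i - y b i)`.
    have hb_le := hle b c hb hb0 hc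
    have hc_le := hle c b hc hc0 hb
    have hlin : gradCLM (y b) (c - b) = ∑ i, c i * y b i - F b := by
      rw [gradCLM_apply, hF b hb hb0, ← Finset.sum_sub_distrib]
      refine Finset.sum_congr rfl fun i _ => ?_
      simp only [Pi.sub_apply]
      ring
    rw [hlin, Real.norm_of_nonneg (by linarith)]
    calc F c - F b - (∑ i, c i * y b i - F b)
        ≤ ∑ i, (c i - b i) * (y c i - y b i) := by
          have : ∑ i, (c i - b i) * (y c i - y b i) =
              F c - ∑ i, c i * y b i - ∑ i, b i * y c i + F b := by
            rw [hF b hb hb0, hF c hc hc0, ← Finset.sum_sub_distrib, ← Finset.sum_sub_distrib,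
              ← Finset.sum_add_distrib]
            exact Finset.sum_congr rfl fun i _ => by ring
          linarith
      _ ≤ ∑ i, ‖c - b‖ * |y c i - y b i| := by
          refine Finset.sum_le_sum fun i _ => (le_abs_self _).trans ?_
          rw [abs_mul]
          exact mul_le_mul_of_nonneg_right (norm_le_pi_norm (c - b) i) (abs_nonneg _)
      _ = (∑ i, |y c i - y b i|) * ‖c - b‖ := by rw [← Finset.mul_sum, mul_comm]
      _ ≤ ε * ‖c - b‖ := mul_le_mul_of_nonneg_right hcε.le (norm_nonneg _)
  · have hg : Continuous (fun v : I → ℝ => gradCLM v) := by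
      unfold gradCLM
      fun_prop
    exact hg.comp_continuousOn hy_cont
  · intro hpos C
    have hK : IsCompact {b : I → ℝ | (∀ i, 0 ≤ b i) ∧ ‖b‖ = 1} := by
      have h1 : IsClosed {b : I → ℝ | ∀ i, 0 ≤ b i} := by
        simp only [Set.ofPred_forall]
        exact isClosed_iInter fun i => isClosed_le continuous_const (continuous_apply i)
      have : {b : I → ℝ | (∀ i, 0 ≤ b i) ∧ ‖b‖ = 1} =
          {b : I → ℝ | ∀ i, 0 ≤ b i} ∩ Metric.sphere 0 1 := by
        ext b; simp
      rw [this]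
      exact (isCompact_sphere _ _).inter_left h1
    have hKne : ∀ b : I → ℝ, ‖b‖ = 1 → b ≠ 0 := by
      rintro b hb rfl
      simp at hb
    have hcont : ContinuousOn (fun b : I → ℝ => ∑ i, b i * y b i)
        {b : I → ℝ | (∀ i, 0 ≤ b i) ∧ ‖b‖ = 1} := by
      have hyK := hy_cont.mono
        (fun b (hb : b ∈ {b : I → ℝ | (∀ i, 0 ≤ b i) ∧ ‖b‖ = 1}) => ⟨hb.1, hKne b hb.2⟩)
      exact continuousOn_finsetSum _ fun i _ =>
        (continuous_apply i).continuousOn.mul ((continuous_apply i).comp_continuousOn hyK)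
    -- Stated without nonemptiness of the unit sphere, so an empty `I` needs no separate case.
    obtain ⟨m, hm, hmle⟩ := hK.exists_forall_le' hcont (a := 0) (by
      rintro b ⟨hb, hb1⟩
      have hb0 := hKne b hb1
      obtain ⟨i, hi⟩ := Function.ne_iff.1 hb0
      have hi' : 0 < b i := lt_of_le_of_ne (hb i) (Ne.symm hi)
      exact Finset.sum_pos' (fun i _ => mul_nonneg (hb i) (hy_nonneg b hb hb0 i))
        ⟨i, Finset.mem_univ i, mul_pos hi' (hpos b hb hb0 i hi')⟩)
    refine ⟨max 1 (C / m), fun b hb hR => ?_⟩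
    have hb1 : 0 < ‖b‖ := lt_of_lt_of_le one_pos ((le_max_left _ _).trans hR)
    have hu : ∀ i, 0 ≤ (‖b‖⁻¹ • b) i := fun i => mul_nonneg (inv_nonneg.2 hb1.le) (hb i)
    have hu1 : ‖‖b‖⁻¹ • b‖ = 1 := by
      rw [norm_smul, norm_inv, norm_norm, inv_mul_cancel₀ hb1.ne']
    calc C ≤ ‖b‖ * m := (div_le_iff₀ hm).1 ((le_max_right _ _).trans hR)
      _ ≤ ‖b‖ * ∑ i, (‖b‖⁻¹ • b) i * y (‖b‖⁻¹ • b) i :=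
          mul_le_mul_of_nonneg_left (hmle _ ⟨hu, hu1⟩) hb1.le
      _ = ∑ i, b i * y (‖b‖⁻¹ • b) i := by
          rw [Finset.mul_sum]
          refine Finset.sum_congr rfl fun i _ => ?_
          simp only [Pi.smul_apply, smul_eq_mul]
          field_simp
      _ ≤ F b := hle _ b hu (hKne _ hu1) hb
end

section
/- Let (T, μ) be a probability space, g : ℝⁿ → ℝ concave, f_j : ℝⁿ → ℝ convex for j = 1,…,m, and c ∈ ℝ^m with {a ∈ ℝⁿ : f_j(a) ≤ c_j for all j} nonempty. Call (x, y) feasible if y ∈ ℝⁿ, x : T → ℝⁿ is measurable and integrable, y_i ≤ E_μ[x_i] for every i, and f_j(x(τ)) ≤ c_j for every τ ∈ T and every j. Assume the primal value g* = sup{ g(y) : (x,y) feasible } is finite and attained. Then there exists b* ∈ ℝⁿ_{≥0} such that g* equals the supremum, over all y ∈ ℝⁿ and all measurable integrable x : T → ℝⁿ with f_j(x(τ)) ≤ c_j for all τ, j, of g(y) + Σ_{i=1}^n b*_i E_μ[x_i − y_i]. Moreover, any feasible (x*, y*) attaining the primal optimum also attains this supremum, and satisfies the complementary slackness conditions b*_i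 (E_μ[x*_i] − y*_i) = 0 for every i. -/
/-!
In `ℝⁿ × ℝ`, the strict hypograph `S` of `g` is convex, and open because a finite concave function
on `ℝⁿ` is continuous. The set `B` of pairs `(y, t)` such that `y` is dominated by the mean of some
admissible `x` and `t ≥ g y₀` is convex, as the constraints are convex and the expectation is
linear. Optimality of `y₀` says exactly that `S` and `B` are disjoint, so Hahn-Banach yields
a functional `L (y, t) = l y + q * t` and a number `u` with `L < u` on `S` and `u ≤ L` on `B`.

Because `y` ranges over all of `ℝⁿ`, the separating hyperplane is not vertical: `(y₀, g y₀ - 1) ∈ S`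
and `(y₀, g y₀) ∈ B` force `q > 0`, with no constraint qualification. As `B` is closed under
decreasing `y`, the coordinates of `l` are nonpositive, and the multiplier is
`b*_i = -l (e_i) / q`. Evaluating `L` at `(y, g y)`, a limit of points of `S`, and at
`(E_μ[x], g y₀) ∈ B` bounds the Lagrangian by `g y₀`. At a primal optimum, the sum of the
nonnegative terms `b*_i (E_μ[x_i] - y_i)` is then at most zero, so each of them vanishes.
-/

open MeasureTheory Set Filter

/-- **Strong Lagrangian duality** for the concave maximization with an expectation
coupling constraint `y ≤ E_μ[x]` and an uncountable family of pointwise convex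
constraints `f j (x τ) ≤ c j` (only the coupling constraints are dualized).
If the primal value is finite and attained (at `(x₀, y₀)`), there exists a
nonnegative `b*` such that the primal value equals the supremum of the Lagrangian
`g y + ∑ i, b* i (E_μ[x i] − y i)` over relaxed pairs; moreover any feasible pair
attaining the primal optimum also attains this supremum and satisfies
complementary slackness `b* i (E_μ[x i] − y i) = 0` for every `i`. -/
theorem stmt_13 {T : Type*} [MeasurableSpace T] (μ : Measure T) [IsProbabilityMeasure μ]
    (n m : ℕ) (g : (Fin n → ℝ) → ℝ) (f : Fin m → (Fin n → ℝ) → ℝ) (c : Fin m → ℝ)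
    (hg : ConcaveOn ℝ Set.univ g) (hf : ∀ j, ConvexOn ℝ Set.univ (f j))
    (hne : ∃ a : Fin n → ℝ, ∀ j, f j a ≤ c j)
    (x₀ : T → Fin n → ℝ) (y₀ : Fin n → ℝ)
    (hx₀_meas : Measurable x₀) (hx₀_int : ∀ i, Integrable (fun τ => x₀ τ i) μ)
    (hy₀ : ∀ i, y₀ i ≤ ∫ τ, x₀ τ i ∂μ) (hx₀_f : ∀ τ j, f j (x₀ τ) ≤ c j)
    (hopt : ∀ (x : T → Fin n → ℝ) (y : Fin n → ℝ),
      Measurable x → (∀ i, Integrable (fun τ => x τ i) μ) →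
      (∀ i, y i ≤ ∫ τ, x τ i ∂μ) → (∀ τ j, f j (x τ) ≤ c j) → g y ≤ g y₀) :
    ∃ bstar : Fin n → ℝ, (∀ i, 0 ≤ bstar i) ∧
      (∀ (x : T → Fin n → ℝ) (y : Fin n → ℝ),
        Measurable x → (∀ i, Integrable (fun τ => x τ i) μ) →
        (∀ τ j, f j (x τ) ≤ c j) →
        g y + ∑ i, bstar i * ((∫ τ, x τ i ∂μ) - y i) ≤ g y₀) ∧
      (∀ (x : T → Fin n → ℝ) (y : Fin n → ℝ),
        Measurable x → (∀ i, Integrable (fun τ => x τ i) μ) →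
        (∀ i, y i ≤ ∫ τ, x τ i ∂μ) → (∀ τ j, f j (x τ) ≤ c j) →
        (∀ (x' : T → Fin n → ℝ) (y' : Fin n → ℝ),
          Measurable x' → (∀ i, Integrable (fun τ => x' τ i) μ) →
          (∀ i, y' i ≤ ∫ τ, x' τ i ∂μ) → (∀ τ j, f j (x' τ) ≤ c j) → g y' ≤ g y) →
        (g y + ∑ i, bstar i * ((∫ τ, x τ i ∂μ) - y i) = g y₀) ∧
        (∀ i, bstar i * ((∫ τ, x τ i ∂μ) - y i) = 0)) := by
  -- The attainable pairs `(y, t)` with `t` at least the optimal value.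
  set B : Set ((Fin n → ℝ) × ℝ) := {p | (∃ x : T → Fin n → ℝ, Measurable x ∧
      (∀ i, Integrable (fun τ => x τ i) μ) ∧ (∀ i, p.1 i ≤ ∫ τ, x τ i ∂μ) ∧
      (∀ τ j, f j (x τ) ≤ c j)) ∧ g y₀ ≤ p.2} with hB
  have hBconv : Convex ℝ B := by
    rintro ⟨y, t⟩ ⟨⟨x, hxm, hxi, hyx, hxf⟩, ht⟩ ⟨y', t'⟩ ⟨⟨x', hxm', hxi', hyx', hxf'⟩, ht'⟩
      a b ha hb hab
    refine ⟨⟨fun τ => a • x τ + b • x' τ, (hxm.const_smul a).add (hxm'.const_smul b),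
      fun i => ?_, fun i => ?_, fun τ j => ?_⟩, ?_⟩
    · exact ((hxi i).const_mul a).add ((hxi' i).const_mul b)
    · have h1 : ∫ τ, (a • x τ + b • x' τ) i ∂μ
          = a * ∫ τ, x τ i ∂μ + b * ∫ τ, x' τ i ∂μ := by
        simp only [Pi.add_apply, Pi.smul_apply, smul_eq_mul]
        rw [integral_add ((hxi i).const_mul a) ((hxi' i).const_mul b),
          integral_const_mul, integral_const_mul]
      rw [h1]
      exact add_le_add (mul_le_mul_of_nonneg_left (hyx i) ha)
        (mul_le_mul_of_nonneg_left (hyx' i) hb)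
    · exact ((hf j).convex_le (c j) ⟨mem_univ _, hxf τ j⟩ ⟨mem_univ _, hxf' τ j⟩ ha hb hab).2
    · have ht1 : g y₀ ≤ t := ht
      have ht1' : g y₀ ≤ t' := ht'
      change g y₀ ≤ a * t + b * t'
      have hb' : b = 1 - a := by linarith
      subst hb'
      nlinarith [mul_le_mul_of_nonneg_left ht1 ha, mul_le_mul_of_nonneg_left ht1' hb]
  have hgc : Continuous g := continuousOn_univ.1 (hg.continuousOn isOpen_univ)
  set S : Set ((Fin n → ℝ) × ℝ) := {p | p.2 < g p.1} with hS
  have hSopen : IsOpen S := isOpen_lt continuous_snd (hgc.comp continuous_fst)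
  have hSconv : Convex ℝ S := by simpa [hS] using hg.convex_strict_hypograph
  have hdisj : Disjoint S B := by
    rw [Set.disjoint_left]
    rintro ⟨y, t⟩ hyS ⟨⟨x, hxm, hxi, hyx, hxf⟩, ht⟩
    exact absurd (hopt x y hxm hxi hyx hxf) (not_le.2 (lt_of_le_of_lt ht hyS))
  obtain ⟨L, u, hLS, hLB⟩ := geometric_hahn_banach_open hSconv hSopen hBconv hdisj
  set l : (Fin n → ℝ) →ₗ[ℝ] ℝ := (L.comp (ContinuousLinearMap.inl ℝ (Fin n → ℝ) ℝ)).toLinearMap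
    with hl
  set q : ℝ := L (0, 1) with hq
  have hLeq : ∀ y t, L (y, t) = l y + q * t := by
    intro y t
    have h : ((y, t) : (Fin n → ℝ) × ℝ) = (y, 0) + t • ((0, 1) : (Fin n → ℝ) × ℝ) := by
      ext <;> simp
    rw [h, map_add, map_smul, smul_eq_mul, mul_comm]
    rfl
  have hsum : ∀ y : Fin n → ℝ, l y = ∑ i, y i * l (Pi.single i 1) := fun y => by
    rw [LinearMap.pi_apply_eq_sum_univ l y]
    refine Finset.sum_congr rfl fun i _ => ?_
    rw [smul_eq_mul]
    congr 2
    ext j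
    simp [Pi.single_apply, eq_comm]
  have hq_pos : 0 < q := by
    have h1 := hLS (y₀, g y₀ - 1) (by simp [hS])
    have h2 := hLB (y₀, g y₀) ⟨⟨x₀, hx₀_meas, hx₀_int, hy₀, hx₀_f⟩, le_rfl⟩
    rw [hLeq] at h1 h2
    linarith
  have hup : ∀ y, l y + q * g y ≤ u := by
    intro y
    refine le_of_forall_pos_le_add fun ε hε => ?_
    have h1 := hLS (y, g y - ε / q) (by simp only [hS, mem_ofPred_eq]; linarith [div_pos hε hq_pos])
    rw [hLeq, mul_sub, mul_div_cancel₀ _ hq_pos.ne'] at h1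
    linarith
  have hlow : ∀ i, l (Pi.single i 1) ≤ 0 := by
    intro i
    -- Lowering the `i`-th coordinate of `y₀` preserves the coupling constraint.
    have h2 := hLB (y₀ - Pi.single i 1, g y₀) ⟨⟨x₀, hx₀_meas, hx₀_int, fun k => by
      have hs : (0 : ℝ) ≤ (Pi.single i 1 : Fin n → ℝ) k := by
        by_cases h : k = i
        · subst h; simp
        · simp [h]
      have := hy₀ k
      simp only [Pi.sub_apply]
      linarith, hx₀_f⟩, le_rfl⟩
    rw [hLeq, map_sub] at h2
    linarith [hup y₀]
  have hnn : ∀ i, 0 ≤ -l (Pi.single i 1) / q := fun i =>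
    div_nonneg (neg_nonneg.2 (hlow i)) hq_pos.le
  have hmain : ∀ (x : T → Fin n → ℝ) (y : Fin n → ℝ),
        Measurable x → (∀ i, Integrable (fun τ => x τ i) μ) →
        (∀ τ j, f j (x τ) ≤ c j) →
        g y + ∑ i, (-l (Pi.single i 1) / q) * ((∫ τ, x τ i ∂μ) - y i) ≤ g y₀ := by
    intro x y hxm hxi hxf
    have h2 := hLB (fun i => ∫ τ, x τ i ∂μ, g y₀) ⟨⟨x, hxm, hxi, fun i => le_rfl, hxf⟩, le_rfl⟩
    rw [hLeq, hsum] at h2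
    have h1 := hup y
    rw [hsum] at h1
    have h3 : q * ∑ i, (-l (Pi.single i 1) / q) * ((∫ τ, x τ i ∂μ) - y i)
        = ∑ i, y i * l (Pi.single i 1) - ∑ i, (∫ τ, x τ i ∂μ) * l (Pi.single i 1) := by
      rw [Finset.mul_sum, ← Finset.sum_sub_distrib]
      refine Finset.sum_congr rfl fun i _ => ?_
      field_simp
      ring
    refine le_of_mul_le_mul_left ?_ hq_pos
    rw [mul_add, h3]
    linarith
  refine ⟨fun i => -l (Pi.single i 1) / q, hnn, hmain, ?_⟩
  intro x y hxm hxi hyx hxf hbest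
  have hge : g y₀ ≤ g y := hbest x₀ y₀ hx₀_meas hx₀_int hy₀ hx₀_f
  have hle := hmain x y hxm hxi hxf
  have hterm : ∀ i ∈ Finset.univ,
      0 ≤ (-l (Pi.single i 1) / q) * ((∫ τ, x τ i ∂μ) - y i) := fun i _ =>
    mul_nonneg (hnn i) (sub_nonneg.2 (hyx i))
  have hpos := Finset.sum_nonneg hterm
  exact ⟨by linarith, fun i =>
    (Finset.sum_eq_zero_iff_of_nonneg hterm).1 (by linarith) i (Finset.mem_univ i)⟩
end
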